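/- arXiv:1706.00564 — 3 statements merged into one kernel-verified Lean document; each statement's English description precedes it below -/
import Mathlib

section
/- Let n ≥ 3 and let a : ℤ/nℤ → ℤ be a function with a_0 = 0. Then for every j ∈ ℤ/nℤ one has ∑_{i ∈ ℤ/nℤ} (a_i − a_{i+1})² ≥ 2·|a_j|. (Equivalently, a fibral divisor V = ∑ a_i v_i with zero coefficient on the identity component satisfies B(V,V) + 2a_j ≤ 0.) -/
theorem aux_tele (b : ℕ → ℤ) (p m : ℕ) :
    |b p - b (p + m)| ≤ ∑ k ∈ Finset.range m, (b (p + k) - b (p + k + 1)) ^ 2 := by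
  induction m with
  | zero => simp
  | succ m ih =>
    rw [Finset.sum_range_succ]
    have h1 : |b (p + m) - b (p + m + 1)| ≤ (b (p + m) - b (p + m + 1)) ^ 2 := by
      generalize b (p + m) - b (p + m + 1) = x
      rw [← sq_abs]
      rcases (abs_nonneg x).eq_or_lt with h | h
      · rw [← h]; norm_num
      · have h' : 1 ≤ |x| := h
        nlinarith
    have h2 := abs_sub_le (b p) (b (p + m)) (b (p + m + 1))
    rw [← add_assoc]
    linarith

theorem aux_sum (n : ℕ) [NeZero n] (f : ZMod n → ℤ) :
    ∑ i : ZMod n, f i = ∑ k ∈ Finset.range n, f (k : ZMod n) := by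
  refine Finset.sum_bij' (fun i _ => i.val) (fun k _ => (k : ZMod n)) ?_ ?_ ?_ ?_ ?_
  · intro i _
    exact Finset.mem_range.2 (ZMod.val_lt i)
  · intro k _
    exact Finset.mem_univ _
  · intro i _
    exact ZMod.natCast_zmod_val i
  · intro k hk
    exact ZMod.val_cast_of_lt (Finset.mem_range.1 hk)
  · intro i _
    rw [ZMod.natCast_zmod_val i]

/-- for `n ≥ 3` and `a : ℤ/nℤ → ℤ` with `a 0 = 0`, for every `j` one has
`∑_{i ∈ ℤ/nℤ} (a_i − a_{i+1})² ≥ 2·|a_j|` (the sum being cyclic over all `i`). -/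
theorem stmt_7 (n : ℕ) [NeZero n] (hn : 3 ≤ n) (a : ZMod n → ℤ) (h0 : a 0 = 0)
    (j : ZMod n) :
    2 * |a j| ≤ ∑ i : ZMod n, (a i - a (i + 1)) ^ 2 := by
  rw [aux_sum]
  obtain ⟨m, hm⟩ := Nat.exists_eq_add_of_le (ZMod.val_lt j).le
  have hr : Finset.range n = Finset.range (j.val + m) := by rw [← hm]
  rw [hr, Finset.sum_range_add]
  have h1 := aux_tele (fun k => a (k : ZMod n)) 0 j.val
  have h2 := aux_tele (fun k => a (k : ZMod n)) j.val m
  rw [← hm] at h2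
  simp only [zero_add, Nat.cast_zero, h0, ZMod.natCast_zmod_val, zero_sub, abs_neg, sub_zero,
    Nat.cast_add, Nat.cast_one, ZMod.natCast_self] at h1 h2 ⊢
  linarith
end

section
/- In the symmetric group of permutations of ℤ/neℤ (with n ≥ 3, e ≥ 1), define P_k := ∏_{l=1}^{e} ((k−1)e+l, ke+l) for k ∈ ℤ/nℤ, a product of e disjoint transpositions. Then the P_k satisfy the Coxeter relations of the affine Weyl group of type Ã_{n−1}: P_k² = 1, (P_k·P_{k+1})³ = 1 for all k, and P_k·P_m = P_m·P_k whenever m ∉ {k−1, k, k+1} in ℤ/nℤ. -/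
/-- `P_k = ∏_{l=1}^{e} ((k−1)e+l, ke+l)`, a product of `e` disjoint transpositions of `ℤ/Nℤ`. -/
def Pperm (N : ℕ) (e : ℕ) (k : ℤ) : Equiv.Perm (ZMod N) :=
  ((List.range e).map
    (fun l => Equiv.swap (((k - 1) * (e : ℤ) + l + 1 : ℤ) : ZMod N)
                         ((k * (e : ℤ) + l + 1 : ℤ) : ZMod N))).prod

/-- The point `ke + l + 1` of `ℤ/neℤ`. -/
def pt (n e : ℕ) (k : ℤ) (l : ℕ) : ZMod (n * e) := ((k * (e : ℤ) + l + 1 : ℤ) : ZMod (n * e))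

theorem pt_inj (n e : ℕ) (he : 1 ≤ e) {j j' : ℤ} {l l' : ℕ} (hl : l < e) (hl' : l' < e)
    (h : pt n e j l = pt n e j' l') : l = l' ∧ (j : ZMod n) = (j' : ZMod n) := by
  unfold pt at h
  rw [ZMod.intCast_eq_intCast_iff_dvd_sub] at h
  obtain ⟨c, hc⟩ := h
  push_cast at hc
  have h1 : (e : ℤ) ∣ (l' : ℤ) - l := ⟨n * c - (j' - j), by linarith⟩
  have h2 : (l' : ℤ) - l = 0 := by
    apply Int.eq_zero_of_abs_lt_dvd h1
    rw [abs_lt]; constructor <;> omega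
  refine ⟨by omega, ?_⟩
  rw [ZMod.intCast_eq_intCast_iff_dvd_sub]
  refine ⟨c, ?_⟩
  have he' : (e : ℤ) ≠ 0 := by omega
  apply mul_right_cancel₀ he'
  linarith

theorem pt_surj (n e : ℕ) (he : 1 ≤ e) (x : ZMod (n * e)) :
    ∃ j : ℤ, ∃ l : ℕ, l < e ∧ x = pt n e j l := by
  obtain ⟨z, rfl⟩ := ZMod.intCast_surjective x
  have he' : (0 : ℤ) < e := by omega
  have h0 := Int.emod_nonneg (z - 1) he'.ne'
  have h1 := Int.emod_lt_of_pos (z - 1) he'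
  refine ⟨(z - 1) / e, ((z - 1) % e).toNat, by omega, ?_⟩
  unfold pt
  rw [Int.toNat_of_nonneg h0]
  congr 1
  have := Int.mul_ediv_add_emod (z - 1) e
  linarith

theorem swap_pt (n e : ℕ) (k j : ℤ) (l : ℕ) :
    ∃ j', Equiv.swap (pt n e (k - 1) l) (pt n e k l) (pt n e j l) = pt n e j' l := by
  rw [Equiv.swap_apply_def]
  split_ifs
  exacts [⟨_, rfl⟩, ⟨_, rfl⟩, ⟨_, rfl⟩]

theorem prod_pt (n e : ℕ) (he : 1 ≤ e) (k : ℤ) (m : ℕ) (hm : m ≤ e) :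
    ∀ (j : ℤ) (l : ℕ), l < e →
    ((List.range m).map (fun l => Equiv.swap (pt n e (k - 1) l) (pt n e k l))).prod (pt n e j l)
      = if l < m then Equiv.swap (pt n e (k - 1) l) (pt n e k l) (pt n e j l) else pt n e j l := by
  induction m with
  | zero => intro j l _; simp
  | succ m ih =>
    intro j l hl
    rw [List.range_succ, List.map_append, List.prod_append, Equiv.Perm.mul_apply]
    simp only [List.map_cons, List.map_nil, List.prod_cons, List.prod_nil, mul_one]
    by_cases hlm : l = m
    · subst hlm
      obtain ⟨j', hj'⟩ := swap_pt n e k j l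
      rw [hj', ih (by omega) j' l hl]
      simp
    · have h1 : ∀ i, pt n e j l ≠ pt n e i m := fun i h =>
        hlm (pt_inj n e he hl (by omega) h).1
      rw [Equiv.swap_apply_of_ne_of_ne (h1 _) (h1 _), ih (by omega) j l hl]
      have : l < m ↔ l < m + 1 := by omega
      simp only [this]

theorem Pperm_pt (n e : ℕ) (he : 1 ≤ e) (k j : ℤ) (l : ℕ) (hl : l < e) :
    Pperm (n * e) e k (pt n e j l)
      = Equiv.swap (pt n e (k - 1) l) (pt n e k l) (pt n e j l) := by
  have := prod_pt n e he k e le_rfl j l hl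
  rw [if_pos hl] at this
  unfold Pperm
  unfold pt at this ⊢
  have hl2 : (do let a ← List.range e; pure (a : ℤ) : List ℤ)
      = (List.range e).map (fun a : ℕ => (a : ℤ)) := by
    generalize List.range e = L
    rw [bind_pure_comp]
    rfl
  rw [hl2, List.map_map]
  exact this

theorem swap_braid {α : Type*} [DecidableEq α] (a b c : α) (hab : a ≠ b) (hbc : b ≠ c)
    (hac : a ≠ c) : (Equiv.swap a b * Equiv.swap b c) ^ 3 = 1 := by
  ext x
  simp only [pow_succ, pow_zero, one_mul, Equiv.Perm.mul_apply, Equiv.Perm.one_apply,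
    Equiv.swap_apply_def]
  grind

theorem pperm_pair (n e : ℕ) (he : 1 ≤ e) (k m j : ℤ) (l : ℕ) (hl : l < e) :
    (∃ j', (Pperm (n * e) e k * Pperm (n * e) e m) (pt n e j l) = pt n e j' l) ∧
    (Pperm (n * e) e k * Pperm (n * e) e m) (pt n e j l) =
      (Equiv.swap (pt n e (k - 1) l) (pt n e k l) * Equiv.swap (pt n e (m - 1) l) (pt n e m l))
        (pt n e j l) := by
  simp only [Equiv.Perm.mul_apply]
  rw [Pperm_pt n e he m j l hl]
  obtain ⟨j', hj'⟩ := swap_pt n e m j l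
  rw [hj', Pperm_pt n e he k j' l hl]
  exact ⟨swap_pt n e k j' l, rfl⟩

theorem stmt_16 (n e : ℕ) (hn : 3 ≤ n) (he : 1 ≤ e) :
    (∀ k : ℤ, (Pperm (n * e) e k) ^ 2 = 1) ∧
    (∀ k : ℤ, (Pperm (n * e) e k * Pperm (n * e) e (k + 1)) ^ 3 = 1) ∧
    (∀ k m : ℤ,
      (m : ZMod n) ≠ (k : ZMod n) - 1 → (m : ZMod n) ≠ (k : ZMod n) →
        (m : ZMod n) ≠ (k : ZMod n) + 1 →
      Pperm (n * e) e k * Pperm (n * e) e m = Pperm (n * e) e m * Pperm (n * e) e k) := by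
  refine ⟨fun k => ?_, fun k => ?_, fun k m h1 h2 h3 => ?_⟩
  · apply Equiv.ext
    intro x
    obtain ⟨j, l, hl, rfl⟩ := pt_surj n e he x
    rw [pow_two, (pperm_pair n e he k k j l hl).2, Equiv.swap_mul_self]
  · apply Equiv.ext
    intro x
    obtain ⟨j, l, hl, rfl⟩ := pt_surj n e he x
    have hne : ∀ a b : ℤ, 0 < b - a → b - a < n → pt n e a l ≠ pt n e b l := by
      intro a b hab hab' h
      have := (pt_inj n e he hl hl h).2
      rw [ZMod.intCast_eq_intCast_iff_dvd_sub] at this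
      have := Int.le_of_dvd hab this
      omega
    have hb := swap_braid (pt n e (k - 1) l) (pt n e k l) (pt n e (k + 1) l)
      (hne _ _ (by omega) (by omega)) (hne _ _ (by omega) (by omega))
      (hne _ _ (by omega) (by omega))
    have hp := fun i => pperm_pair n e he k (k + 1) i l hl
    simp only [add_sub_cancel_right] at hp
    generalize Pperm (n * e) e k * Pperm (n * e) e (k + 1) = P at hp ⊢
    generalize Equiv.swap (pt n e (k - 1) l) (pt n e k l) *
      Equiv.swap (pt n e k l) (pt n e (k + 1) l) = S at hp hb
    rw [← hb]
    simp only [pow_succ, pow_zero, one_mul, Equiv.Perm.mul_apply]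
    obtain ⟨⟨j1, h1⟩, h1'⟩ := hp j
    obtain ⟨⟨j2, h2⟩, h2'⟩ := hp j1
    rw [← h1', h1, ← h2', h2, (hp j2).2]
  · apply Equiv.ext
    intro x
    obtain ⟨j, l, hl, rfl⟩ := pt_surj n e he x
    rw [(pperm_pair n e he k m j l hl).2, (pperm_pair n e he m k j l hl).2]
    have hne : ∀ a b : ℤ, (a : ZMod n) ≠ b → pt n e a l ≠ pt n e b l :=
      fun a b hab h => hab (pt_inj n e he hl hl h).2
    have a1 := hne m (k - 1) (by push_cast; exact h1)
    have a2 := hne m k h2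
    have a3 := hne (m - 1) k (by push_cast; intro h; exact h3 (by rw [← h]; ring))
    have a4 := hne (m - 1) (k - 1) (by
      push_cast; intro h; exact h2 (by simpa using h))
    simp only [Equiv.Perm.mul_apply, Equiv.swap_apply_def]
    grind
end

section
/- In the symmetric group of permutations of ℤ/neℤ (with n ≥ 3, e ≥ 1), fix j ∈ ℤ/nℤ and define U(j,0) := (je, je+1), U(j,i) := (je−i, je−i+1)·(je+i, je+i+1) for 1 ≤ i < e, T(j,i) := U(j,0)·U(j,1)⋯U(j,i), and S(j,i) := T(j,i−1)·T(j,i−2)⋯T(j,0). Then for every k with 1 ≤ k ≤ e, S(j,k) = (je−k+1, je+1)·(je−k+2, je+2)⋯(je, je+k), a product of k disjoint transpositions. -/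
/-- `U(j,0) = (je, je+1)` and `U(j,i) = (je−i, je−i+1)·(je+i, je+i+1)` for `i ≥ 1`,
as permutations of `ℤ/Nℤ`; here `c` stands for `je`. -/
def Uperm (N : ℕ) (c : ℤ) : ℕ → Equiv.Perm (ZMod N)
  | 0 => Equiv.swap ((c : ℤ) : ZMod N) ((c + 1 : ℤ) : ZMod N)
  | i + 1 =>
      Equiv.swap ((c - (i + 1) : ℤ) : ZMod N) ((c - (i + 1) + 1 : ℤ) : ZMod N) *
        Equiv.swap ((c + (i + 1) : ℤ) : ZMod N) ((c + (i + 1) + 1 : ℤ) : ZMod N)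

/-- `T(j,i) = U(j,0)·U(j,1)⋯U(j,i)`. -/
def Tperm (N : ℕ) (c : ℤ) : ℕ → Equiv.Perm (ZMod N)
  | 0 => Uperm N c 0
  | i + 1 => Tperm N c i * Uperm N c (i + 1)

/-- `S(j,i) = T(j,i−1)·T(j,i−2)⋯T(j,0)` (with `S(j,0) = 1`). -/
def Sperm (N : ℕ) (c : ℤ) : ℕ → Equiv.Perm (ZMod N)
  | 0 => 1
  | i + 1 => Tperm N c i * Sperm N c i

theorem aux_inj (N : ℕ) (e c a b : ℤ) (ha : -e ≤ a) (ha' : a < N - e) (hb : -e ≤ b)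
    (hb' : b < N - e) : (((c + a : ℤ) : ZMod N) = ((c + b : ℤ) : ZMod N)) ↔ a = b := by
  constructor
  · intro h
    rw [ZMod.intCast_eq_intCast_iff_dvd_sub] at h
    have h2 : (c + b - (c + a)) = 0 := by
      apply Int.eq_zero_of_abs_lt_dvd h
      rw [abs_lt]
      constructor <;> linarith
    linarith
  · rintro rfl; rfl

theorem aux_swap (N : ℕ) (e c a b m x y : ℤ) (hx : x = c + a) (hy : y = c + b)
    (ha : -e ≤ a) (ha' : a < N - e) (hb : -e ≤ b)
    (hb' : b < N - e) (hm : -e ≤ m) (hm' : m < N - e) :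
    Equiv.swap (x : ZMod N) (y : ZMod N) ((c + m : ℤ) : ZMod N)
      = ((c + (if m = a then b else if m = b then a else m) : ℤ) : ZMod N) := by
  subst hx hy
  rw [Equiv.swap_apply_def]
  simp only [aux_inj N e c m a hm hm' ha ha', aux_inj N e c m b hm hm' hb hb']
  split_ifs <;> rfl

/-- The action of `T(j,i)` on offsets. -/
def tauOff (i m : ℤ) : ℤ :=
  if m = -i then 1 else if m = i + 1 then 0 else
  if -i < m ∧ m ≤ 0 then m - 1 else if 1 ≤ m ∧ m ≤ i then m + 1 else m

/-- The action of a partial product of the disjoint transpositions on offsets. -/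
def sigOff (k p m : ℤ) : ℤ :=
  if -k < m ∧ m ≤ -k + p then m + k else if 1 ≤ m ∧ m ≤ p then m - k else m

theorem aux_T (N : ℕ) (e c : ℤ) (hN : 2 * e < N) (i : ℕ) (hi : (i : ℤ) < e) (m : ℤ)
    (hm : -e ≤ m) (hm' : m < N - e) :
    Tperm N c i ((c + m : ℤ) : ZMod N) = ((c + tauOff i m : ℤ) : ZMod N) := by
  induction i generalizing m with
  | zero =>
    rw [Tperm, Uperm, aux_swap N e c 0 1 m _ _ (by ring) rfl (by omega) (by omega) (by omega)
      (by omega) hm hm']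
    congr 2
    unfold tauOff
    split_ifs <;> omega
  | succ i ih =>
    push_cast at hi
    rw [Tperm, Uperm, Equiv.Perm.mul_apply, Equiv.Perm.mul_apply,
      aux_swap N e c (i + 1) (i + 2) m _ _ (by ring) (by ring) (by omega) (by omega) (by omega)
      (by omega) hm hm',
      aux_swap N e c (-(i + 1)) (-i) _ _ _ (by ring) (by ring) (by omega) (by omega) (by omega)
      (by omega) (by split_ifs <;> omega) (by split_ifs <;> omega),
      ih (by omega) _ (by split_ifs <;> omega) (by split_ifs <;> omega)]
    congr 2
    unfold tauOff
    push_cast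
    grind

theorem aux_S (N : ℕ) (e c : ℤ) (hN : 2 * e < N) (k : ℕ) (hk : (k : ℤ) ≤ e) (m : ℤ)
    (hm : -e ≤ m) (hm' : m < N - e) :
    Sperm N c k ((c + m : ℤ) : ZMod N) = ((c + sigOff k k m : ℤ) : ZMod N) := by
  induction k with
  | zero =>
    rw [Sperm, Equiv.Perm.one_apply]
    congr 2
    unfold sigOff
    split_ifs <;> omega
  | succ k ih =>
    push_cast at hk
    rw [Sperm, Equiv.Perm.mul_apply, ih (by omega),
      aux_T N e c hN k (by omega) _ (by unfold sigOff; split_ifs <;> omega)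
        (by unfold sigOff; split_ifs <;> omega)]
    congr 2
    unfold sigOff tauOff
    push_cast
    grind

theorem aux_P (N : ℕ) (e c : ℤ) (hN : 2 * e < N) (k : ℕ) (hk : (k : ℤ) ≤ e) (p : ℕ)
    (hp : p ≤ k) (m : ℤ) (hm : -e ≤ m) (hm' : m < N - e) :
    ((List.range p).map (fun l : ℕ => Equiv.swap ((c - k + l + 1 : ℤ) : ZMod N)
      ((c + l + 1 : ℤ) : ZMod N))).prod ((c + m : ℤ) : ZMod N)
      = ((c + sigOff k p m : ℤ) : ZMod N) := by
  induction p generalizing m with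
  | zero =>
    simp only [List.range_zero, List.map_nil, List.prod_nil, Equiv.Perm.one_apply]
    congr 2
    unfold sigOff
    split_ifs <;> omega
  | succ p ih =>
    rw [List.range_succ, List.map_append, List.prod_append, Equiv.Perm.mul_apply, List.map_singleton,
      List.prod_singleton,
      aux_swap N e c (-k + p + 1) (p + 1) m _ _ (by ring) (by ring) (by omega) (by omega) (by omega)
      (by omega) hm hm', ih (by omega) _ (by split_ifs <;> omega) (by split_ifs <;> omega)]
    congr 2
    unfold sigOff
    push_cast
    grind

theorem aux_surj (N : ℕ) (hN : 0 < N) (e c : ℤ) (x : ZMod N) :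
    ∃ m : ℤ, -e ≤ m ∧ m < N - e ∧ x = ((c + m : ℤ) : ZMod N) := by
  obtain ⟨y, rfl⟩ := ZMod.intCast_surjective x
  have h0 : (0 : ℤ) < N := by exact_mod_cast hN
  refine ⟨(y - c + e) % N - e, ?_, ?_, ?_⟩
  · have := Int.emod_nonneg (y - c + e) h0.ne'
    linarith
  · have := Int.emod_lt_of_pos (y - c + e) h0
    linarith
  · rw [ZMod.intCast_eq_intCast_iff_dvd_sub]
    refine ⟨-((y - c + e) / N), ?_⟩
    have := Int.emod_add_mul_ediv (y - c + e) N
    linarith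

/-- for `1 ≤ k ≤ e`,
`S(j,k) = (je−k+1, je+1)·(je−k+2, je+2)⋯(je, je+k)`, a product of `k` disjoint
transpositions of `ℤ/neℤ`. -/
theorem stmt_17 (n e : ℕ) (hn : 3 ≤ n) (he : 1 ≤ e) (j : ℤ) (k : ℕ)
    (hk1 : 1 ≤ k) (hke : k ≤ e) :
    Sperm (n * e) (j * (e : ℤ)) k =
      ((List.range k).map
        (fun l => Equiv.swap ((j * (e : ℤ) - k + l + 1 : ℤ) : ZMod (n * e))
                             ((j * (e : ℤ) + l + 1 : ℤ) : ZMod (n * e)))).prod := by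

  have hN : 2 * (e : ℤ) < ((n * e : ℕ) : ℤ) := by
    push_cast
    have h1 : (3 : ℤ) ≤ n := by exact_mod_cast hn
    have h2 : (1 : ℤ) ≤ e := by exact_mod_cast he
    nlinarith
  ext x
  obtain ⟨m, hm, hm', rfl⟩ := aux_surj (n * e) (by positivity) e (j * e) x
  rw [aux_S (n * e) e (j * e) hN k (by omega) m hm hm',
    ← aux_P (n * e) e (j * e) hN k (by omega) k le_rfl m hm hm']
  have hl : (do let a ← List.range k; pure (a : ℤ) : List ℤ)
      = (List.range k).map (fun a : ℕ => (a : ℤ)) := by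
    simp [List.map_eq_flatMap]
  rw [hl, List.map_map]
  rfl
end
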